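/- Let q be a prime power with q ≡ 1 (mod 52) and let β be a primitive 13th root of unity in F_q. Then (q,13) gives a 3-design if and only if the sequence (χ(1−β), χ(1−β²), χ(1−β³), χ(1−β⁴), χ(1−β⁵), χ(1−β⁶)) is, up to a global sign, one of the following four sequences: (1,1,−1,1,−1,−1), (1,1,−1,−1,−1,1), (1,−1,1,1,−1,−1), (1,−1,1,−1,−1,1). Here χ is the quadratic residue character of F_q. -/

import Mathlib

/-!
Setting: `F` is a finite field of order `q`. The projective line `PG(1,q)` is
modelled as `Projectivization F (Fin 2 → F)`. Since scalar matrices act trivially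
on the projective line, the images of a set under all elements of `SL(2,F)` form
exactly its `PSL(2,F)`-orbit; `mapSL g` is the map of the projective line induced
by `g : SL(2,F)`. For `k ∣ q - 1`, the unique subgroup of order `k` of `Fˣ` is the
set of `k`-th roots of unity `{x : F | x ^ k = 1}`, embedded into the projective
line via `x ↦ [x : 1]`. `(q, k)` gives a 3-design iff there is `lam > 0` such that
every 3-subset of the projective line lies in exactly `lam` blocks of the orbit.
-/

noncomputable section

open Matrix

/-- The point at infinity `[1 : 0]` of the projective line over `F`. -/
def inftyPt (F : Type) [Field F] : Projectivization F (Fin 2 → F) :=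
  Projectivization.mk F ![1, 0] (by
    intro h
    simpa using congrFun h 0)

/-- The embedding of `F` into the projective line, `x ↦ [x : 1]`. -/
def embedPt (F : Type) [Field F] (x : F) : Projectivization F (Fin 2 → F) :=
  Projectivization.mk F ![x, 1] (by
    intro h
    simpa using congrFun h 1)

/-- The action of `g : SL(2,F)` on the projective line (as linear fractional
transformation). -/
def mapSL {F : Type} [Field F] (g : Matrix.SpecialLinearGroup (Fin 2) F) :
    Projectivization F (Fin 2 → F) → Projectivization F (Fin 2 → F) :=
  Projectivization.map (Matrix.SpecialLinearGroup.toLin' g : (Fin 2 → F) →ₗ[F] (Fin 2 → F))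
    (Matrix.SpecialLinearGroup.toLin' g).injective

/-- The starter block: the unique subgroup of order `k` of `Fˣ` (the `k`-th roots
of unity, for `k ∣ q - 1`), regarded as a subset of the projective line. -/
def starterB (F : Type) [Field F] (k : ℕ) : Set (Projectivization F (Fin 2 → F)) :=
  embedPt F '' {x : F | x ^ k = 1}

/-- The `PSL(2,F)`-orbit `GB` of the starter block. -/
def designBlocks (F : Type) [Field F] (k : ℕ) :
    Set (Set (Projectivization F (Fin 2 → F))) :=
  {S | ∃ g : Matrix.SpecialLinearGroup (Fin 2) F, S = mapSL g '' starterB F k}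

/-- `GB` is the block set of a `3-(q+1, k, lam)` design: `lam` is positive and every
3-subset of the projective line is contained in exactly `lam` blocks. -/
def isThreeDesign (F : Type) [Field F] (k lam : ℕ) : Prop :=
  0 < lam ∧
    ∀ T : Finset (Projectivization F (Fin 2 → F)), T.card = 3 →
      {S ∈ designBlocks F k | (T : Set (Projectivization F (Fin 2 → F))) ⊆ S}.ncard = lam

/-- `(q, k)` gives a 3-design. -/
def gives3Design (F : Type) [Field F] (k : ℕ) : Prop :=
  ∃ lam : ℕ, isThreeDesign F k lam

/-- The sequence `(χ(1-β), χ(1-β²), …, χ(1-β⁶))` is, up to a global sign `ε`, one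
of the four sequences `(1,1,-1,1,-1,-1)`, `(1,1,-1,-1,-1,1)`, `(1,-1,1,1,-1,-1)`,
`(1,-1,1,-1,-1,1)`. -/
def goodChiSequence (F : Type) [Field F] [Fintype F] [DecidableEq F] (β : F) : Prop :=
  ∃ ε : ℤ, (ε = 1 ∨ ε = -1) ∧
    ((quadraticChar F (1 - β), quadraticChar F (1 - β ^ 2), quadraticChar F (1 - β ^ 3),
        quadraticChar F (1 - β ^ 4), quadraticChar F (1 - β ^ 5), quadraticChar F (1 - β ^ 6)) =
          (ε, ε, -ε, ε, -ε, -ε) ∨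
      (quadraticChar F (1 - β), quadraticChar F (1 - β ^ 2), quadraticChar F (1 - β ^ 3),
        quadraticChar F (1 - β ^ 4), quadraticChar F (1 - β ^ 5), quadraticChar F (1 - β ^ 6)) =
          (ε, ε, -ε, -ε, -ε, ε) ∨
      (quadraticChar F (1 - β), quadraticChar F (1 - β ^ 2), quadraticChar F (1 - β ^ 3),
        quadraticChar F (1 - β ^ 4), quadraticChar F (1 - β ^ 5), quadraticChar F (1 - β ^ 6)) =
          (ε, -ε, ε, ε, -ε, -ε) ∨
      (quadraticChar F (1 - β), quadraticChar F (1 - β ^ 2), quadraticChar F (1 - β ^ 3),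
        quadraticChar F (1 - β ^ 4), quadraticChar F (1 - β ^ 5), quadraticChar F (1 - β ^ 6)) =
          (ε, -ε, ε, -ε, -ε, ε))

/-!
Give an ordered triple `(u, v, w)` of points of the projective line the sign
`χ([u, v][v, w][w, u])`, where `[·, ·]` is the determinant of homogeneous coordinates. An element
`g` of `GL(2, F)` multiplies signs by `χ(det g)`, and `GL(2, F)` is transitive on triples of
distinct points, so these triples form two orbits of `SL(2, F)`, told apart by the sign, and the
signs of all triples add up to `0`. The number of blocks through a triple therefore depends only on
its sign. Counting incident pairs (triple, block) with sign shows that the two values agree, i.e.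
that the orbit of `B` is a 3-design, iff the signs of the triples inside `B` add up to `0`.

For `B = ⟨β⟩` of odd order `k` all powers of `β` are squares, so this signed sum equals
`k ∑_{a, b} c(a) c(b - a) c(-b)` with `c(i) = χ(1 - βⁱ)`. For `k = 13` and `-1` a square, `c` is an
even function and the sum is a cubic polynomial in the six signs `c(1), …, c(6)`, whose zeros are
found by inspecting the 64 sign patterns.
-/

open scoped Pointwise LinearAlgebra.Projectivization MatrixGroups

section CyclicSum

theorem sum_mul_mul_sub_eq {A R : Type*} [AddCommGroup A] [Fintype A] [NonAssocSemiring R]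
    (c : A → R) :
    ∑ i, ∑ j, ∑ l, c (j - i) * c (l - j) * c (i - l) =
      Fintype.card A * ∑ a, ∑ b, c a * c (b - a) * c (-b) := by
  have hshift (i : A) : ∑ j, ∑ l, c (j - i) * c (l - j) * c (i - l) =
      ∑ a, ∑ b, c a * c (b - a) * c (-b) := by
    rw [← Equiv.sum_comp (Equiv.addRight i)]
    refine Finset.sum_congr rfl fun a _ ↦ ?_
    rw [← Equiv.sum_comp (Equiv.addRight i)]
    simp
  simp only [hshift, Finset.sum_const, Finset.card_univ, nsmul_eq_mul]

end CyclicSum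

section OrbitCounting

variable {G α β : Type*} [Group G] [MulAction G α] [MulAction G β] {I : α → β → Prop}

theorem ncard_incident_orbit_smul (hI : ∀ (g : G) a b, I (g • a) (g • b) ↔ I a b)
    (b₀ : β) (g : G) (a : α) :
    {b ∈ MulAction.orbit G b₀ | I (g • a) b}.ncard =
      {b ∈ MulAction.orbit G b₀ | I a b}.ncard := by
  rw [← Set.ncard_image_of_injective {b ∈ MulAction.orbit G b₀ | I a b} (MulAction.injective g)]
  congr 1
  ext b
  constructor
  · rintro ⟨hb, hab⟩
    refine ⟨g⁻¹ • b, ⟨MulAction.mem_orbit_of_mem_orbit g⁻¹ hb, ?_⟩, smul_inv_smul g b⟩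
    rwa [← hI g, smul_inv_smul]
  · rintro ⟨b, ⟨hb, hab⟩, rfl⟩
    exact ⟨MulAction.mem_orbit_of_mem_orbit g hb, (hI g a b).2 hab⟩

theorem finsum_incident_smul (hI : ∀ (g : G) a b, I (g • a) (g • b) ↔ I a b)
    {M : Type*} [AddCommMonoid M] {f : α → M} (hf : ∀ (g : G) a, f (g • a) = f a) (g : G) (b : β) :
    ∑ᶠ a ∈ {a | I a (g • b)}, f a = ∑ᶠ a ∈ {a | I a b}, f a := by
  refine (finsum_mem_eq_of_bijOn (g • ·) ⟨?_, ?_, ?_⟩ fun a _ ↦ (hf g a).symm).symm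
  · exact fun a ha ↦ (hI g a b).2 ha
  · exact (MulAction.injective g).injOn
  · exact fun a ha ↦ ⟨g⁻¹ • a, by rwa [Set.mem_ofPred_eq, ← hI g, smul_inv_smul], smul_inv_smul g a⟩

theorem finsum_mul_ncard_incident_orbit [Finite α] [Finite β]
    (hI : ∀ (g : G) a b, I (g • a) (g • b) ↔ I a b)
    {R : Type*} [NonAssocSemiring R] {f : α → R} (hf : ∀ (g : G) a, f (g • a) = f a) (b₀ : β) :
    ∑ᶠ a, f a * {b ∈ MulAction.orbit G b₀ | I a b}.ncard =
      (MulAction.orbit G b₀).ncard * ∑ᶠ a ∈ {a | I a b₀}, f a := by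
  classical
  have := Fintype.ofFinite α
  have hfin : (MulAction.orbit G b₀).Finite := Set.toFinite _
  have hcard (a : α) : f a * {b ∈ MulAction.orbit G b₀ | I a b}.ncard =
      ∑ b ∈ hfin.toFinset, if I a b then f a else 0 := by
    rw [← Finset.sum_filter, Finset.sum_const, nsmul_eq_mul, Nat.cast_comm, ← Set.ncard_coe_finset]
    simp [Set.ofPred_and]
  have hconst : ∀ b ∈ hfin.toFinset,
      ∑ a, (if I a b then f a else 0) = ∑ᶠ a ∈ {a | I a b₀}, f a := by
    intro b hb
    obtain ⟨g, rfl⟩ := hfin.mem_toFinset.1 hb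
    rw [← finsum_incident_smul hI hf g, ← Finset.sum_filter, ← finsum_mem_coe_finset]
    simp
  rw [finsum_eq_sum_of_fintype, Finset.sum_congr rfl fun a _ ↦ hcard a, Finset.sum_comm,
    Finset.sum_congr rfl hconst, Finset.sum_const, nsmul_eq_mul, Set.ncard_eq_toFinset_card _ hfin]

end OrbitCounting

section Bracket

variable {K : Type*} [Field K]

/-- The bracket `[u, v] = u₀ v₁ - u₁ v₀` of two homogeneous coordinate vectors; it vanishes
exactly when they represent the same point of the projective line. -/
def bracket (u v : Fin 2 → K) : K := (of ![u, v]).det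

theorem bracket_apply (u v : Fin 2 → K) : bracket u v = u 0 * v 1 - u 1 * v 0 := by
  simp [bracket, det_fin_two, mul_comm]

theorem bracket_smul_smul (a b : K) (u v : Fin 2 → K) :
    bracket (a • u) (b • v) = a * b * bracket u v := by
  simp only [bracket_apply, Pi.smul_apply, smul_eq_mul]
  ring

theorem bracket_GL_smul (g : GL (Fin 2) K) (u v : Fin 2 → K) :
    bracket (g • u) (g • v) = g.det * bracket u v := by
  simp only [bracket_apply, GeneralLinearGroup.val_det_apply, det_fin_two,
    GeneralLinearGroup.fin_two_smul, cons_val_zero, cons_val_one]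
  ring

theorem bracket_smul_add_bracket_smul (u v w : Fin 2 → K) :
    bracket w v • u + bracket u w • v = bracket u v • w := by
  ext i
  fin_cases i <;> simp [bracket_apply] <;> ring

theorem bracket_rep_ne_zero_iff {p q : ℙ K (Fin 2 → K)} : bracket p.rep q.rep ≠ 0 ↔ p ≠ q := by
  rw [← Projectivization.linearIndependent_pair_iff_ne, bracket, ← isUnit_iff_ne_zero,
    ← isUnit_iff_isUnit_det, ← linearIndependent_rows_iff_isUnit]
  rfl

/-- The cyclic product `[u, v][v, w][w, u]`. Rescaling the vectors multiplies it by a square. -/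
def tripleBracket (u v w : Fin 2 → K) : K := bracket u v * bracket v w * bracket w u

theorem tripleBracket_smul (a b c : K) (u v w : Fin 2 → K) :
    tripleBracket (a • u) (b • v) (c • w) = (a * b * c) ^ 2 * tripleBracket u v w := by
  simp only [tripleBracket, bracket_smul_smul]
  ring

theorem tripleBracket_GL_smul (g : GL (Fin 2) K) (u v w : Fin 2 → K) :
    tripleBracket (g • u) (g • v) (g • w) = (g.det : K) ^ 2 * (g.det * tripleBracket u v w) := by
  simp only [tripleBracket, bracket_GL_smul]
  ring

theorem exists_SL_smul_eq_GL_smul {g : GL (Fin 2) K} (hg : IsSquare (g.det : K)) :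
    ∃ h : SL(2, K), ∀ p : ℙ K (Fin 2 → K), h • p = g • p := by
  obtain ⟨s, hs⟩ := hg
  have hs0 : s ≠ 0 := by
    rintro rfl
    exact g.det.ne_zero (by simpa using hs)
  have hdet : (s⁻¹ • g.1).det = 1 := by
    rw [det_smul, ← GeneralLinearGroup.val_det_apply, hs, Fintype.card_fin]
    field_simp
  refine ⟨⟨s⁻¹ • g.1, hdet⟩, fun p ↦ ?_⟩
  induction p with | h u hu
  exact (Projectivization.mk_eq_mk_iff' ..).2 ⟨s⁻¹, (smul_assoc s⁻¹ g.1 u).symm⟩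

end Bracket

section TripleSign

variable {K : Type*} [Field K] [Fintype K] [DecidableEq K]

theorem quadraticChar_sq_mul {a : K} (ha : a ≠ 0) (x : K) :
    quadraticChar K (a ^ 2 * x) = quadraticChar K x := by
  rw [map_mul, quadraticChar_sq_one' ha, one_mul]

theorem quadraticChar_eq_one_of_pow_eq_one {n : ℕ} (hn : Odd n) {x : K} (hx : x ^ n = 1) :
    quadraticChar K x = 1 := by
  have hx0 : x ≠ 0 := by
    rintro rfl
    simp [hn.pos.ne'] at hx
  refine (quadraticChar_dichotomy hx0).resolve_right fun h ↦ ?_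
  have hpow := congrArg (quadraticChar K) hx
  rw [map_pow, h, hn.neg_one_pow, map_one] at hpow
  norm_num at hpow

/-- Ordered triples of points of the projective line over `K`. -/
abbrev PointTriple (K : Type*) [Field K] : Type _ :=
  ℙ K (Fin 2 → K) × ℙ K (Fin 2 → K) × ℙ K (Fin 2 → K)

/-- The orientation of an ordered triple of points of the projective line: the quadratic character
of the cyclic product of brackets, which does not depend on the chosen representatives. It is `0`
when two of the points coincide and `±1` otherwise. -/
def tripleSign (t : PointTriple K) : ℤ :=
  quadraticChar K (tripleBracket t.1.rep t.2.1.rep t.2.2.rep)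

theorem tripleSign_mk {u v w : Fin 2 → K} (hu : u ≠ 0) (hv : v ≠ 0) (hw : w ≠ 0) :
    tripleSign (.mk K u hu, .mk K v hv, .mk K w hw) = quadraticChar K (tripleBracket u v w) := by
  obtain ⟨a, ha⟩ := Projectivization.exists_smul_eq_mk_rep K u hu
  obtain ⟨b, hb⟩ := Projectivization.exists_smul_eq_mk_rep K v hv
  obtain ⟨c, hc⟩ := Projectivization.exists_smul_eq_mk_rep K w hw
  have habc : (a * b * c : K) ≠ 0 := by simp
  simp only [tripleSign, ← ha, ← hb, ← hc, Units.smul_def]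
  rw [tripleBracket_smul, quadraticChar_sq_mul habc]

theorem tripleSign_GL_smul (g : GL (Fin 2) K) (t : PointTriple K) :
    tripleSign (g • t) = quadraticChar K g.det * tripleSign t := by
  obtain ⟨p, q, r⟩ := t
  induction p with | h u hu
  induction q with | h v hv
  induction r with | h w hw
  simp only [Prod.smul_mk, Projectivization.smul_mk, tripleSign_mk]
  rw [tripleBracket_GL_smul, quadraticChar_sq_mul g.det.ne_zero, map_mul]

theorem tripleSign_ne_zero_iff {p q r : ℙ K (Fin 2 → K)} :
    tripleSign (p, q, r) ≠ 0 ↔ p ≠ q ∧ q ≠ r ∧ r ≠ p := by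
  simp only [tripleSign, tripleBracket, ne_eq, quadraticChar_eq_zero_iff, mul_eq_zero, not_or,
    and_assoc]
  exact and_congr bracket_rep_ne_zero_iff
    (and_congr bracket_rep_ne_zero_iff bracket_rep_ne_zero_iff)

theorem tripleSign_eq_one_or_neg_one {t : PointTriple K} (ht : tripleSign t ≠ 0) :
    tripleSign t = 1 ∨ tripleSign t = -1 :=
  quadraticChar_dichotomy fun h ↦ ht (quadraticChar_eq_zero_iff.2 h)

theorem tripleSign_SL_smul (g : SL(2, K)) (t : PointTriple K) :
    tripleSign (g • t) = tripleSign t := by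
  have h := tripleSign_GL_smul (g : GL (Fin 2) K) t
  rwa [SpecialLinearGroup.coeToGL_det, Units.val_one, map_one, one_mul] at h

theorem finsum_tripleSign_eq_zero (hK : ringChar K ≠ 2) :
    ∑ᶠ t : PointTriple K, tripleSign t = 0 := by
  obtain ⟨d, hd⟩ := quadraticChar_exists_neg_one' hK
  obtain ⟨g, hg⟩ : ∃ g : GL (Fin 2) K, g.det = d :=
    ⟨GeneralLinearGroup.mkOfDetNeZero !![(d : K), 0; 0, 1] (by simp),
      Units.ext (by simp [GeneralLinearGroup.mkOfDetNeZero])⟩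
  have hneg : ∑ᶠ t : PointTriple K, tripleSign t =
      -∑ᶠ t : PointTriple K, tripleSign t := by
    rw [← finsum_neg_distrib, ← finsum_comp_equiv (MulAction.toPerm g)]
    simp [tripleSign_GL_smul, hg, hd]
  omega

/-- The signed count of the oriented triples contained in `S`. -/
def signSum (S : Set (ℙ K (Fin 2 → K))) : ℤ := ∑ᶠ t ∈ S ×ˢ S ×ˢ S, tripleSign t

theorem signSum_range {ι : Type*} [Fintype ι] {e : ι → ℙ K (Fin 2 → K)}
    (he : Function.Injective e) :
    signSum (Set.range e) = ∑ i, ∑ j, ∑ l, tripleSign (e i, e j, e l) := by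
  have hrange : Set.range e ×ˢ Set.range e ×ˢ Set.range e =
      Set.range (Prod.map e (Prod.map e e)) := by
    simp only [Set.range_prodMap]
  rw [signSum, hrange, finsum_mem_range (he.prodMap (he.prodMap he)), finsum_eq_sum_of_fintype,
    Fintype.sum_prod_type]
  simp only [Fintype.sum_prod_type, Prod.map_apply]

end TripleSign

section Transitivity

variable {F : Type} [Field F]

theorem exists_GL_smul_frame_eq {u v w : Fin 2 → F} (hu : u ≠ 0) (hv : v ≠ 0) (hw : w ≠ 0)
    (huvw : tripleBracket u v w ≠ 0) :
    ∃ g : GL (Fin 2) F, g • (inftyPt F, embedPt F 0, embedPt F 1) =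
      (Projectivization.mk F u hu, Projectivization.mk F v hv, Projectivization.mk F w hw) := by
  let M : Matrix (Fin 2) (Fin 2) F := (of ![bracket w v • u, bracket u w • v])ᵀ
  have hdet : M.det = tripleBracket u v w := by
    rw [det_transpose, ← bracket, bracket_smul_smul, tripleBracket]
    simp only [bracket_apply]
    ring
  let g := GeneralLinearGroup.mkOfDetNeZero M (hdet ▸ huvw)
  have hg (x : Fin 2 → F) : g • x = x 0 • bracket w v • u + x 1 • bracket u w • v := by
    ext i
    fin_cases i <;> simp [g, M, GeneralLinearGroup.mkOfDetNeZero] <;> ring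
  refine ⟨g, Prod.ext ?_ (Prod.ext ?_ ?_)⟩
  · refine (Projectivization.mk_eq_mk_iff' ..).2 ⟨bracket w v, ?_⟩
    simp [hg]
  · refine (Projectivization.mk_eq_mk_iff' ..).2 ⟨bracket u w, ?_⟩
    simp [hg]
  · refine (Projectivization.mk_eq_mk_iff' ..).2 ⟨bracket u v, ?_⟩
    simp [hg, bracket_smul_add_bracket_smul]

variable [Fintype F] [DecidableEq F] {t t' : PointTriple F}

theorem exists_GL_smul_frame_eq_of_tripleSign_ne_zero (ht : tripleSign t ≠ 0) :
    ∃ g : GL (Fin 2) F, g • (inftyPt F, embedPt F 0, embedPt F 1) = t := by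
  obtain ⟨p, q, r⟩ := t
  have hbracket := mt quadraticChar_eq_zero_iff.2 ht
  simpa only [Projectivization.mk_rep] using
    exists_GL_smul_frame_eq p.rep_nonzero q.rep_nonzero r.rep_nonzero hbracket

theorem exists_GL_smul_eq (ht : tripleSign t ≠ 0) (ht' : tripleSign t' ≠ 0) :
    ∃ g : GL (Fin 2) F, g • t = t' := by
  obtain ⟨g, rfl⟩ := exists_GL_smul_frame_eq_of_tripleSign_ne_zero ht
  obtain ⟨g', rfl⟩ := exists_GL_smul_frame_eq_of_tripleSign_ne_zero ht'
  exact ⟨g' * g⁻¹, by rw [mul_smul, inv_smul_smul]⟩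

theorem exists_SL_smul_eq (ht : tripleSign t ≠ 0) (htt' : tripleSign t = tripleSign t') :
    ∃ g : SL(2, F), g • t = t' := by
  obtain ⟨g, rfl⟩ := exists_GL_smul_eq ht (htt' ▸ ht)
  have hdet : quadraticChar F g.det = 1 := by
    rw [tripleSign_GL_smul] at htt'
    exact mul_right_cancel₀ ht (by rw [one_mul, ← htt'])
  obtain ⟨h, hh⟩ :=
    exists_SL_smul_eq_GL_smul ((quadraticChar_one_iff_isSquare g.det.ne_zero).1 hdet)
  exact ⟨h, Prod.ext (hh _) (Prod.ext (hh _) (hh _))⟩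

end Transitivity

section Blocks

theorem smul_mem_prod_smul_iff {G α : Type*} [Group G] [MulAction G α] (g : G) (t : α × α × α)
    (S : Set α) : g • t ∈ (g • S) ×ˢ (g • S) ×ˢ (g • S) ↔ t ∈ S ×ˢ S ×ˢ S := by
  simp only [Set.mem_prod, Prod.smul_fst, Prod.smul_snd, Set.smul_mem_smul_set_iff]

variable {F : Type} [Field F]

theorem designBlocks_eq_orbit (k : ℕ) :
    designBlocks F k = MulAction.orbit SL(2, F) (starterB F k) := by
  ext S
  -- `mapSL g` is definitionally Mathlib's action of `g` on the projectivization.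
  exact exists_congr fun g ↦ eq_comm

theorem starterB_mem_designBlocks (k : ℕ) : starterB F k ∈ designBlocks F k := by
  rw [designBlocks_eq_orbit]
  exact MulAction.mem_orbit_self _

/-- The number of blocks through the three points of `t`. -/
def blockCount (k : ℕ) (t : PointTriple F) : ℕ :=
  {S ∈ designBlocks F k | t ∈ S ×ˢ S ×ˢ S}.ncard

theorem blockCount_SL_smul (k : ℕ) (g : SL(2, F)) (t : PointTriple F) :
    blockCount k (g • t) = blockCount k t := by
  simp only [blockCount, designBlocks_eq_orbit]
  exact ncard_incident_orbit_smul (I := fun t S ↦ t ∈ S ×ˢ S ×ˢ S) smul_mem_prod_smul_iff _ g t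

variable [Fintype F] [DecidableEq F] {k : ℕ}

theorem gives3Design_iff_exists_blockCount_eq :
    gives3Design F k ↔
      ∃ lam, 0 < lam ∧ ∀ t : PointTriple F, tripleSign t ≠ 0 → blockCount k t = lam := by
  classical
  have hcount (p q r : ℙ F (Fin 2 → F)) :
      {S ∈ designBlocks F k | (({p, q, r} : Finset (ℙ F (Fin 2 → F))) : Set _) ⊆ S}.ncard =
        blockCount k (p, q, r) := by
    simp [blockCount, Set.insert_subset_iff]
  refine exists_congr fun lam ↦ and_congr_right fun _ ↦ ⟨fun h ⟨p, q, r⟩ ht ↦ ?_, fun h T hT ↦ ?_⟩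
  · obtain ⟨hpq, hqr, hrp⟩ := tripleSign_ne_zero_iff.1 ht
    rw [← hcount, h _ (Finset.card_eq_three.2 ⟨p, q, r, hpq, hrp.symm, hqr, rfl⟩)]
  · obtain ⟨p, q, r, hpq, hpr, hqr, rfl⟩ := Finset.card_eq_three.1 hT
    rw [hcount, h _ (tripleSign_ne_zero_iff.2 ⟨hpq, hqr, hpr.symm⟩)]

theorem finsum_tripleSign_mul_blockCount (k : ℕ) :
    ∑ᶠ t : PointTriple F, tripleSign t * blockCount k t =
      (designBlocks F k).ncard * signSum (starterB F k) := by
  simp only [blockCount, designBlocks_eq_orbit]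
  exact finsum_mul_ncard_incident_orbit smul_mem_prod_smul_iff tripleSign_SL_smul _

theorem blockCount_eq_of_tripleSign_eq {t t' : PointTriple F} (ht : tripleSign t ≠ 0)
    (htt' : tripleSign t = tripleSign t') : blockCount k t = blockCount k t' := by
  obtain ⟨g, rfl⟩ := exists_SL_smul_eq ht htt'
  rw [blockCount_SL_smul]

theorem signSum_starterB_eq_zero_of_gives3Design (hF : ringChar F ≠ 2) (h : gives3Design F k) :
    signSum (starterB F k) = 0 := by
  obtain ⟨lam, -, hlam⟩ := gives3Design_iff_exists_blockCount_eq.1 h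
  have hblocks : (designBlocks F k).ncard ≠ 0 :=
    Set.ncard_ne_zero_of_mem (starterB_mem_designBlocks k)
  have hterm (t : PointTriple F) : tripleSign t * blockCount k t = tripleSign t * lam := by
    by_cases ht : tripleSign t = 0
    · simp [ht]
    · rw [hlam t ht]
  have hsum := finsum_tripleSign_mul_blockCount (F := F) k
  rw [finsum_congr hterm, ← finsum_mul, finsum_tripleSign_eq_zero hF, zero_mul] at hsum
  simpa [hblocks] using hsum.symm

theorem blockCount_eq_of_signSum_starterB_eq_zero (hF : ringChar F ≠ 2)
    (hsum : signSum (starterB F k) = 0) {t₁ t₂ : PointTriple F} (ht₁ : tripleSign t₁ = 1)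
    (ht₂ : tripleSign t₂ = -1) : blockCount k t₁ = blockCount k t₂ := by
  obtain ⟨a, ha⟩ : ∃ a : ℤ, blockCount k t₁ = a := ⟨_, rfl⟩
  obtain ⟨b, hb⟩ : ∃ b : ℤ, blockCount k t₂ = b := ⟨_, rfl⟩
  have hterm (t : PointTriple F) : 2 * (tripleSign t * blockCount k t) =
      (a + b) * tripleSign t + (a - b) * tripleSign t ^ 2 := by
    by_cases ht : tripleSign t = 0
    · simp [ht]
    · rcases tripleSign_eq_one_or_neg_one ht with h | h
      · rw [blockCount_eq_of_tripleSign_eq ht (h.trans ht₁.symm), h, ha]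
        ring
      · rw [blockCount_eq_of_tripleSign_eq ht (h.trans ht₂.symm), h, hb]
        ring
  have hsq : 0 < ∑ᶠ t : PointTriple F, tripleSign t ^ 2 :=
    finsum_pos (fun t ↦ sq_nonneg _) ⟨t₁, by simp [ht₁]⟩ (Set.toFinite _)
  have hzero : (a - b) * ∑ᶠ t : PointTriple F, tripleSign t ^ 2 = 0 := by
    have h := finsum_congr hterm
    rw [finsum_add_distrib (Set.toFinite _) (Set.toFinite _), ← mul_finsum, ← mul_finsum,
      ← mul_finsum, finsum_tripleSign_eq_zero hF, finsum_tripleSign_mul_blockCount, hsum] at h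
    simpa using h.symm
  have hab : a = b := sub_eq_zero.1 ((mul_eq_zero.1 hzero).resolve_right hsq.ne')
  exact_mod_cast ha.trans (hab.trans hb.symm)

theorem gives3Design_iff_signSum_starterB_eq_zero (hF : ringChar F ≠ 2) {t₀ : PointTriple F}
    (ht₀ : tripleSign t₀ ≠ 0) (hmem : t₀ ∈ starterB F k ×ˢ starterB F k ×ˢ starterB F k) :
    gives3Design F k ↔ signSum (starterB F k) = 0 := by
  refine ⟨signSum_starterB_eq_zero_of_gives3Design hF, fun hsum ↦ ?_⟩
  refine gives3Design_iff_exists_blockCount_eq.2 ⟨blockCount k t₀, ?_, fun t ht ↦ ?_⟩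
  · exact Nat.pos_of_ne_zero (Set.ncard_ne_zero_of_mem ⟨starterB_mem_designBlocks k, hmem⟩)
  · rcases tripleSign_eq_one_or_neg_one ht with h | h <;>
      rcases tripleSign_eq_one_or_neg_one ht₀ with h₀ | h₀
    · exact blockCount_eq_of_tripleSign_eq ht (h.trans h₀.symm)
    · exact blockCount_eq_of_signSum_starterB_eq_zero hF hsum h h₀
    · exact (blockCount_eq_of_signSum_starterB_eq_zero hF hsum h₀ h).symm
    · exact blockCount_eq_of_tripleSign_eq ht (h.trans h₀.symm)

end Blocks

section GapSign

variable {K : Type*} [Field K] [Fintype K] [DecidableEq K] {k : ℕ} {β : K}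

theorem pow_val_eq_mul_pow_val_sub {M : Type*} [Monoid M] {k : ℕ} [NeZero k] {x : M}
    (hx : x ^ k = 1) (i j : Fin k) : x ^ j.val = x ^ i.val * x ^ (j - i).val := by
  rw [← pow_add, ← Nat.mod_add_div (i.val + (j - i).val) k, ← Fin.val_add, pow_add, pow_mul, hx,
    one_pow, mul_one, add_sub_cancel]

/-- The sign `χ(1 - βⁱ)`, as a function of the exponent modulo the order `k` of `β`. -/
def gapSign (β : K) (i : Fin k) : ℤ := quadraticChar K (1 - β ^ i.val)

theorem gapSign_zero [NeZero k] (β : K) : gapSign β (0 : Fin k) = 0 := by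
  simp [gapSign]

theorem gapSign_sq_eq_one [NeZero k] (hβ : IsPrimitiveRoot β k) {i : Fin k} (hi : i ≠ 0) :
    gapSign β i ^ 2 = 1 :=
  quadraticChar_sq_one <| sub_ne_zero.2
    (hβ.pow_ne_one_of_pos_of_lt (Fin.val_ne_zero_iff.2 hi) i.isLt).symm

theorem quadraticChar_pow_sub_pow [NeZero k] (hk : Odd k) (hβ : β ^ k = 1) (i j : Fin k) :
    quadraticChar K (β ^ i.val - β ^ j.val) = gapSign β (j - i) := by
  rw [pow_val_eq_mul_pow_val_sub hβ i j, ← mul_one_sub, map_mul, map_pow,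
    quadraticChar_eq_one_of_pow_eq_one hk hβ, one_pow, one_mul, gapSign]

theorem gapSign_neg [NeZero k] (hK : IsSquare (-1 : K)) (hk : Odd k) (hβ : β ^ k = 1)
    (i : Fin k) : gapSign β (-i) = gapSign β i := by
  have hneg : quadraticChar K (-1) = 1 :=
    (quadraticChar_one_iff_isSquare (neg_ne_zero.2 one_ne_zero)).2 hK
  have hswap := quadraticChar_pow_sub_pow hk hβ i 0
  rwa [← neg_sub, neg_eq_neg_one_mul, map_mul, hneg, one_mul, quadraticChar_pow_sub_pow hk hβ,
    sub_zero, zero_sub, eq_comm] at hswap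

end GapSign

section RootsOfUnity

variable {F : Type} [Field F]

theorem embedPt_injective : Function.Injective (embedPt F) := by
  intro x y hxy
  obtain ⟨a, ha⟩ := (Projectivization.mk_eq_mk_iff' ..).1 hxy
  have ha1 : a = 1 := by simpa using congrFun ha 1
  simpa [ha1] using (congrFun ha 0).symm

variable {k : ℕ} {β : F}

theorem embedPt_pow_val_injective (hβ : IsPrimitiveRoot β k) :
    Function.Injective fun i : Fin k ↦ embedPt F (β ^ i.val) := fun i j hij ↦
  Fin.val_injective (hβ.pow_inj i.isLt j.isLt (embedPt_injective hij))

theorem starterB_eq_range [NeZero k] (hβ : IsPrimitiveRoot β k) :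
    starterB F k = Set.range fun i : Fin k ↦ embedPt F (β ^ i.val) := by
  have hroots : {x : F | x ^ k = 1} = Set.range fun i : Fin k ↦ β ^ i.val := by
    ext x
    constructor
    · intro hx
      obtain ⟨i, hi, rfl⟩ := hβ.eq_pow_of_pow_eq_one hx
      exact ⟨⟨i, hi⟩, rfl⟩
    · rintro ⟨i, rfl⟩
      change (β ^ i.val) ^ k = 1
      rw [pow_right_comm, hβ.pow_eq_one, one_pow]
  rw [starterB, hroots, ← Set.range_comp]
  rfl

variable [Fintype F] [DecidableEq F]

theorem tripleSign_embedPt (x y z : F) :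
    tripleSign (embedPt F x, embedPt F y, embedPt F z) =
      quadraticChar F (x - y) * quadraticChar F (y - z) * quadraticChar F (z - x) := by
  rw [embedPt, embedPt, embedPt, tripleSign_mk, tripleBracket, map_mul, map_mul]
  simp [bracket_apply]

theorem signSum_starterB [NeZero k] (hk : Odd k) (hβ : IsPrimitiveRoot β k) :
    signSum (starterB F k) =
      k * ∑ a : Fin k, ∑ b : Fin k, gapSign β a * gapSign β (b - a) * gapSign β (-b) := by
  rw [starterB_eq_range hβ, signSum_range (embedPt_pow_val_injective hβ)]
  simp only [tripleSign_embedPt, quadraticChar_pow_sub_pow hk hβ.pow_eq_one]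
  rw [sum_mul_mul_sub_eq, Fintype.card_fin]

theorem gives3Design_iff_sum_gapSign_eq_zero [NeZero k] (hF : ringChar F ≠ 2) (hk : Odd k)
    (hk1 : k ≠ 1) (hβ : IsPrimitiveRoot β k) :
    gives3Design F k ↔
      ∑ a : Fin k, ∑ b : Fin k, gapSign β a * gapSign β (b - a) * gapSign β (-b) = 0 := by
  have hk3 : 2 < k := by
    obtain ⟨m, rfl⟩ := hk
    omega
  let e (i : Fin k) : ℙ F (Fin 2 → F) := embedPt F (β ^ i.val)
  have he : Function.Injective e := embedPt_pow_val_injective hβ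
  have hmem (i : Fin k) : e i ∈ starterB F k := starterB_eq_range hβ ▸ Set.mem_range_self i
  have hsign : tripleSign (e ⟨0, by omega⟩, e ⟨1, by omega⟩, e ⟨2, hk3⟩) ≠ 0 :=
    tripleSign_ne_zero_iff.2 ⟨he.ne (by simp), he.ne (by simp), he.ne (by simp)⟩
  rw [gives3Design_iff_signSum_starterB_eq_zero hF hsign ⟨hmem _, hmem _, hmem _⟩,
    signSum_starterB hk hβ, mul_eq_zero, Nat.cast_eq_zero, or_iff_right (NeZero.ne k)]

end RootsOfUnity

section ThirteenthRoots

/-- View `0, a, b` as a triangle on the 13-cycle, with side lengths in `{1, …, 6}`. Each of the six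
isosceles shapes `{i, i, 2i}` comes from 6 pairs `(a, b)` and contributes `c (2i)`; each of the
eight scalene shapes comes from 12 pairs because of its mirror image. -/
theorem sum_mul_mul_eq_of_even (c : Fin 13 → ℤ) (h0 : c 0 = 0) (heven : ∀ i, c (-i) = c i)
    (hsq : ∀ i, i ≠ 0 → c i ^ 2 = 1) :
    ∑ a, ∑ b, c a * c (b - a) * c (-b) =
      6 * (c 1 + c 2 + c 3 + c 4 + c 5 + c 6 +
        2 * (c 1 * c 2 * c 3 + c 1 * c 3 * c 4 + c 1 * c 4 * c 5 + c 1 * c 5 * c 6 +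
          c 2 * c 3 * c 5 + c 2 * c 4 * c 6 + c 2 * c 5 * c 6 + c 3 * c 4 * c 6)) := by
  have h7 : c 7 = c 6 := heven 6
  have h8 : c 8 = c 5 := heven 5
  have h9 : c 9 = c 4 := heven 4
  have h10 : c 10 = c 3 := heven 3
  have h11 : c 11 = c 2 := heven 2
  have h12 : c 12 = c 1 := heven 1
  simp only [heven, Fin.sum_univ_ofNat, Fin.reduceSub]
  simp only [h0, h7, h8, h9, h10, h11, h12, mul_zero, zero_mul, add_zero, zero_add]
  linear_combination 6 * c 2 * hsq 1 (by decide) + 6 * c 4 * hsq 2 (by decide) +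
    6 * c 6 * hsq 3 (by decide) + 6 * c 5 * hsq 4 (by decide) + 6 * c 3 * hsq 5 (by decide) +
    6 * c 1 * hsq 6 (by decide)

theorem sign_cubic_eq_zero_iff {x₁ x₂ x₃ x₄ x₅ x₆ : ℤ}
    (h₁ : x₁ = 1 ∨ x₁ = -1) (h₂ : x₂ = 1 ∨ x₂ = -1) (h₃ : x₃ = 1 ∨ x₃ = -1)
    (h₄ : x₄ = 1 ∨ x₄ = -1) (h₅ : x₅ = 1 ∨ x₅ = -1) (h₆ : x₆ = 1 ∨ x₆ = -1) :
    x₁ + x₂ + x₃ + x₄ + x₅ + x₆ +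
        2 * (x₁ * x₂ * x₃ + x₁ * x₃ * x₄ + x₁ * x₄ * x₅ + x₁ * x₅ * x₆ +
          x₂ * x₃ * x₅ + x₂ * x₄ * x₆ + x₂ * x₅ * x₆ + x₃ * x₄ * x₆) = 0 ↔
      ∃ ε : ℤ, (ε = 1 ∨ ε = -1) ∧
        ((x₁, x₂, x₃, x₄, x₅, x₆) = (ε, ε, -ε, ε, -ε, -ε) ∨
          (x₁, x₂, x₃, x₄, x₅, x₆) = (ε, ε, -ε, -ε, -ε, ε) ∨
          (x₁, x₂, x₃, x₄, x₅, x₆) = (ε, -ε, ε, ε, -ε, -ε) ∨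
          (x₁, x₂, x₃, x₄, x₅, x₆) = (ε, -ε, ε, -ε, -ε, ε)) := by
  simp only [or_and_right, exists_or, exists_eq_left]
  rcases h₁ with rfl | rfl <;> rcases h₂ with rfl | rfl <;> rcases h₃ with rfl | rfl <;>
    rcases h₄ with rfl | rfl <;> rcases h₅ with rfl | rfl <;> rcases h₆ with rfl | rfl <;> simp

variable {F : Type} [Field F] [Fintype F] [DecidableEq F] {β : F}

theorem sum_gapSign_eq_zero_iff_goodChiSequence (hF : IsSquare (-1 : F))
    (hβ : IsPrimitiveRoot β 13) :
    ∑ a : Fin 13, ∑ b : Fin 13, gapSign β a * gapSign β (b - a) * gapSign β (-b) = 0 ↔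
      goodChiSequence F β := by
  have heven := gapSign_neg hF (by decide) hβ.pow_eq_one
  have hsign {i : Fin 13} (hi : i ≠ 0) : gapSign β i = 1 ∨ gapSign β i = -1 :=
    sq_eq_one_iff.1 (gapSign_sq_eq_one hβ hi)
  have hone : gapSign β (1 : Fin 13) = quadraticChar F (1 - β) := by simp [gapSign]
  rw [sum_mul_mul_eq_of_even _ (gapSign_zero β) heven fun i hi ↦ gapSign_sq_eq_one hβ hi,
    mul_eq_zero_iff_left (by norm_num),
    sign_cubic_eq_zero_iff (hsign (by decide)) (hsign (by decide)) (hsign (by decide))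
      (hsign (by decide)) (hsign (by decide)) (hsign (by decide)), hone]
  rfl

end ThirteenthRoots

/-- Theorem 5.1, (i) ↔ (iii): for `q ≡ 1 (mod 52)` and `β` a primitive 13th root
of unity, `(q,13)` gives a 3-design iff the sequence
`(χ(1-β), …, χ(1-β⁶))` is one of the eight listed sequences. -/
theorem stmt_18 (F : Type) [Field F] [Fintype F] [DecidableEq F]
    (q : ℕ) (hq : Fintype.card F = q) (hq52 : q % 52 = 1)
    (β : F) (hβ : orderOf β = 13) :
    gives3Design F 13 ↔ goodChiSequence F β := by
  have hp : IsPrimitiveRoot β 13 := hβ ▸ IsPrimitiveRoot.orderOf β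
  have hchar : ringChar F ≠ 2 := fun h ↦ by
    have := FiniteField.even_card_of_char_two h
    omega
  have hneg : IsSquare (-1 : F) := FiniteField.isSquare_neg_one_iff.2 (by omega)
  rw [gives3Design_iff_sum_gapSign_eq_zero hchar (by decide) (by decide) hp,
    sum_gapSign_eq_zero_iff_goodChiSequence hneg hp]
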